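/- arXiv:1108.3249 — 2 statements merged into one kernel-verified Lean document; each statement's English description precedes it below -/
import Mathlib

section
/- For all positive integers n and m, the number of permutations of the regular multiset [n]_m avoiding the multiset pattern 212 (the m-Stirling permutations with n distinct elements) equals the product ∏_{j=0}^{n−1} (j·m + 1) = 1·(m+1)·(2m+1)···((n−1)m+1). -/
/-!
Let `a` be the largest letter of a `212`-avoiding word. Its occurrences are adjacent, since a letter
between two of them would be smaller, and deleting them leaves a `212`-avoiding word. Conversely a
block of copies of `a` can be inserted into a `212`-avoiding word `l` of smaller letters at any of
its `l.length + 1` positions, without creating a `212`. Hence each letter `a` of a multiset `s`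
contributes to the number of `212`-avoiding words with content `s` a factor one more than the
number of smaller letters of `s`.
-/


/-- A permutation `p` of length `n` contains the permutation `q` of length `k` as a pattern. -/
def PermContains {n k : ℕ} (p : Equiv.Perm (Fin n)) (q : Equiv.Perm (Fin k)) : Prop :=
  ∃ f : Fin k → Fin n, StrictMono f ∧ ∀ a b : Fin k, p (f a) < p (f b) ↔ q a < q b

/-- A word `w` over `{1,…,n}` contains the permutation pattern `q` of length `k`. -/
def WordContains {l n k : ℕ} (w : Fin l → Fin n) (q : Equiv.Perm (Fin k)) : Prop :=
  ∃ f : Fin k → Fin l, StrictMono f ∧ ∀ a b : Fin k, w (f a) < w (f b) ↔ q a < q b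

/-- `w` is a permutation of the regular multiset `[n]_m`: each letter occurs exactly `m` times. -/
def IsRegularWord {l n : ℕ} (m : ℕ) (w : Fin l → Fin n) : Prop :=
  ∀ j : Fin n, (Finset.univ.filter fun i => w i = j).card = m

/-- Ordered-subgraph containment for simple bipartite graphs given by their edge sets. -/
def GraphContains {n n' k k' : ℕ} (P : Finset (Fin n × Fin n')) (Q : Finset (Fin k × Fin k')) :
    Prop :=
  ∃ (f : Fin k → Fin n) (f' : Fin k' → Fin n'),
    StrictMono f ∧ StrictMono f' ∧ ∀ v v', (v, v') ∈ Q → (f v, f' v') ∈ P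

/-- The bipartite graph associated to a permutation `q`: edges `(i, q i)`. -/
def permGraph {k : ℕ} (q : Equiv.Perm (Fin k)) : Finset (Fin k × Fin k) :=
  Finset.univ.image fun i => (i, q i)

/-- The bipartite graph associated to a word `w`: edges `(i, w i)`. -/
def wordGraph {l n : ℕ} (w : Fin l → Fin n) : Finset (Fin l × Fin n) :=
  Finset.univ.image fun i => (i, w i)

/-- Pattern containment for 0-1 matrices. -/
def MatContains {n n' k k' : ℕ} (P : Fin n → Fin n' → Bool) (Q : Fin k → Fin k' → Bool) : Prop :=
  ∃ (r : Fin k → Fin n) (c : Fin k' → Fin n'),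
    StrictMono r ∧ StrictMono c ∧ ∀ i j, Q i j = true → P (r i) (c j) = true

/-- The permutation matrix of a permutation `q`: 1-entry at `(i, q i)`. -/
def permMatrix {k : ℕ} (q : Equiv.Perm (Fin k)) : Fin k → Fin k → Bool :=
  fun i j => decide (q i = j)

/-- The number of 1-entries of a 0-1 matrix. -/
def oneEntries {n n' : ℕ} (P : Fin n → Fin n' → Bool) : ℕ :=
  (Finset.univ.filter fun ij : Fin n × Fin n' => P ij.1 ij.2 = true).card

/-- The contraction of a bipartite graph on `([n·m],[n])` to one on `([n],[n])`:
`(i,j)` is an edge iff some vertex `t` in the `i`-th block of `m` consecutive vertices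
is joined to `j`. -/
def contraction {n m : ℕ} (G : Finset (Fin (n * m) × Fin n)) : Finset (Fin n × Fin n) :=
  Finset.univ.filter fun ij : Fin n × Fin n =>
    ∃ t : Fin (n * m), (t, ij.2) ∈ G ∧ m * (ij.1 : ℕ) ≤ (t : ℕ) ∧ (t : ℕ) < m * ((ij.1 : ℕ) + 1)

/-- The 0-1 adjacency matrix of a bipartite graph. -/
def adjMatrix {n n' : ℕ} (G : Finset (Fin n × Fin n')) : Fin n → Fin n' → Bool :=
  fun i j => decide ((i, j) ∈ G)

/-- A word contains the multiset pattern `212`. -/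
def Contains212 {l n : ℕ} (w : Fin l → Fin n) : Prop :=
  ∃ i₁ i₂ i₃ : Fin l, i₁ < i₂ ∧ i₂ < i₃ ∧ w i₁ = w i₃ ∧ w i₂ < w i₁

section List

variable {α : Type*}

theorem cons_sublist_append_iff_of_notMem {x : α} {l p q : List α} (hx : x ∉ p) :
    (x :: l).Sublist (p ++ q) ↔ (x :: l).Sublist q := by
  refine ⟨fun h => ?_, fun h => h.trans (List.sublist_append_right p q)⟩
  induction p with
  | nil => exact h
  | cons y p ih =>
    obtain ⟨hxy, hxp⟩ := List.ne_and_not_mem_of_not_mem_cons hx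
    exact ih hxp (h.of_cons_of_ne hxy)

theorem sublist_ofFn_iff {n : ℕ} {w : Fin n → α} {l : List α} :
    l.Sublist (List.ofFn w) ↔ ∃ is : List (Fin n), is.Pairwise (· < ·) ∧ l = is.map w := by
  rw [List.ofFn_eq_map, List.sublist_map_iff]
  refine exists_congr fun is => and_congr_left fun _ => ⟨fun h => ?_, fun h => ?_⟩
  · exact (List.pairwise_lt_finRange n).sublist h
  · have hsubset : is ⊆ List.finRange n := fun i _ => List.mem_finRange i
    exact List.sublist_of_subperm_of_pairwise (List.subperm_of_subset h.nodup hsubset) h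
      (List.pairwise_lt_finRange n)

theorem append_replicate_append_inj {a : α} {m : ℕ} (hm : m ≠ 0)
    {p q p' q' : List α} (hp : a ∉ p) (hp' : a ∉ p')
    (h : p ++ (List.replicate m a ++ q) = p' ++ (List.replicate m a ++ q')) : p = p' ∧ q = q' := by
  classical
  obtain ⟨k, rfl⟩ := Nat.exists_eq_succ_of_ne_zero hm
  have length_eq : p.length = p'.length := by
    simpa [List.idxOf_append_of_notMem, hp, hp', List.replicate_succ] using
      congrArg (List.idxOf a) h
  obtain ⟨hpp', htail⟩ := List.append_inj h length_eq
  exact ⟨hpp', List.append_cancel_left htail⟩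

end List

section Avoids212

variable {α : Type*}

/-- A list avoids the multiset pattern `212`: the counterpart for lists of `¬ Contains212 w`, which
allows letters to be deleted and inserted. -/
def Avoids212 [LT α] (l : List α) : Prop :=
  ∀ a b : α, b < a → ¬ [a, b, a].Sublist l

theorem Avoids212.sublist [LT α] {l l' : List α} (h : Avoids212 l') (hl : l.Sublist l') :
    Avoids212 l :=
  fun a b hba hs => h a b hba (hs.trans hl)

theorem avoids212_ofFn_iff {l n : ℕ} {w : Fin l → Fin n} :
    Avoids212 (List.ofFn w) ↔ ¬ Contains212 w := by
  refine ⟨?_, fun h a b hba hs => h ?_⟩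
  · rintro h ⟨i₁, i₂, i₃, h₁₂, h₂₃, heq, hlt⟩
    refine h (w i₁) (w i₂) hlt (sublist_ofFn_iff.2 ⟨[i₁, i₂, i₃], ?_, ?_⟩)
    · simp [h₁₂, h₂₃, h₁₂.trans h₂₃]
    · simp [heq]
  · obtain ⟨is, his, hmap⟩ := sublist_ofFn_iff.1 hs
    obtain ⟨i₁, i₂, i₃, rfl⟩ : ∃ i₁ i₂ i₃, is = [i₁, i₂, i₃] :=
      List.length_eq_three.1 (by simpa using (congrArg List.length hmap).symm)
    obtain ⟨⟨h₁₂, -⟩, h₂₃⟩ : (i₁ < i₂ ∧ i₁ < i₃) ∧ i₂ < i₃ := by simpa using his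
    obtain ⟨rfl, rfl, heq⟩ : a = w i₁ ∧ b = w i₂ ∧ a = w i₃ := by simpa using hmap
    exact ⟨i₁, i₂, i₃, h₁₂, h₂₃, heq, hba⟩

theorem Avoids212.append_replicate_append [Preorder α] {a : α} {p q : List α}
    (h : Avoids212 (p ++ q)) (hlt : ∀ x ∈ p ++ q, x < a) (m : ℕ) :
    Avoids212 (p ++ (List.replicate m a ++ q)) := by
  classical
  have hp : a ∉ p := fun ha => (hlt a (List.mem_append_left q ha)).false
  have hq : a ∉ q := fun ha => (hlt a (List.mem_append_right p ha)).false
  intro c b hbc hs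
  obtain rfl | hca := eq_or_ne c a
  · have h_right : [b, c].Sublist (List.replicate m c ++ q) :=
      (List.sublist_cons_self c _).trans ((cons_sublist_append_iff_of_notMem hp).1 hs)
    have hb : b ∉ List.replicate m c := fun hb => hbc.ne (List.eq_of_mem_replicate hb)
    have hcq : [b, c].Sublist q := (cons_sublist_append_iff_of_notMem hb).1 h_right
    exact hq (hcq.subset (by simp))
  · have hle : ∀ x ∈ p ++ (List.replicate m a ++ q), x ≤ a := by grind
    have hba : b ≠ a := (hbc.trans_le (hle c (hs.subset (by simp)))).ne
    have hdelete : (p ++ (List.replicate m a ++ q)).filter (· ≠ a) = p ++ q := by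
      have hpq : (p ++ q).filter (· ≠ a) = p ++ q :=
        List.filter_eq_self.2 fun x hx => by simpa using (hlt x hx).ne
      simpa [List.filter_append] using hpq
    have hs' := hs.filter (· ≠ a)
    rw [hdelete] at hs'
    exact h c b hbc (by simpa [hca, hba] using hs')

theorem Avoids212.exists_eq_append_replicate_append [PartialOrder α] [DecidableEq α] {a : α}
    {l : List α} (h : Avoids212 l) (hle : ∀ x ∈ l, x ≤ a) :
    ∃ p q, a ∉ p ∧ a ∉ q ∧ l = p ++ (List.replicate (l.count a) a ++ q) := by
  induction l with
  | nil => exact ⟨[], [], by simp⟩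
  | cons x l ih =>
    have hl : l.Sublist (x :: l) := List.sublist_cons_self x l
    obtain ⟨p, q, hp, hq, heq⟩ := ih (h.sublist hl) fun y hy => hle y (hl.subset hy)
    obtain rfl | hxa := eq_or_ne x a
    · by_cases hx : x ∈ l
      · obtain rfl : p = [] := by
          refine List.eq_nil_iff_forall_not_mem.2 fun b hb => ?_
          have hbx : b < x := (hle b (by rw [heq]; simp [hb])).lt_of_ne fun hbx => hp (hbx ▸ hb)
          have hxx : [x].Sublist (List.replicate (l.count x) x ++ q) :=
            List.singleton_sublist.2 (by simp [List.count_eq_zero, hx])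
          have hbxl : [b, x].Sublist l := by
            rw [heq]
            exact (List.singleton_sublist.2 hb).append hxx
          exact h x b hbx (hbxl.cons_cons x)
        exact ⟨[], q, hp, hq, by simpa [List.replicate_succ] using heq⟩
      · exact ⟨[], l, by simp, hx, by simp [List.count_eq_zero_of_not_mem hx]⟩
    · exact ⟨x :: p, q, by simp [hp, hxa.symm], hq, by simpa [List.count_cons_of_ne hxa] using heq⟩

end Avoids212

section StirlingWord

variable {α : Type*}

/-- The Stirling permutations of an arbitrary multiset `s`: the `212`-avoiding words in which each
letter occurs as often as in `s`. -/
def StirlingWord [LT α] (s : Multiset α) : Type _ :=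
  {l : List α // (l : Multiset α) = s ∧ Avoids212 l}

theorem card_subtype_map_eq_and_not_contains212 {l n : ℕ} {s : Multiset (Fin n)}
    (hs : s.card = l) :
    Nat.card {w : Fin l → Fin n // Finset.univ.val.map w = s ∧ ¬ Contains212 w} =
      Nat.card (StirlingWord s) := by
  refine Nat.card_eq_of_bijective (fun w => ⟨List.ofFn w.1, by
    rw [← Fin.univ_val_map]; exact w.2.1, avoids212_ofFn_iff.2 w.2.2⟩) ⟨fun w w' h => ?_, ?_⟩
  · exact Subtype.ext (List.ofFn_injective (congrArg Subtype.val h))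
  · rintro ⟨L, rfl, hL⟩
    obtain rfl : L.length = l := hs
    have hget : List.ofFn L.get = L := List.ofFn_get L
    exact ⟨⟨L.get, by rw [Fin.univ_val_map, hget], avoids212_ofFn_iff.1 (hget.symm ▸ hL)⟩,
      Subtype.ext hget⟩

/-- Inserts a block of `m` copies of `a`, larger than all letters of `s`, into a Stirling word with
content `s`; the position `k` is the number of letters to the left of the block. -/
def StirlingWord.insertBlock [Preorder α] {s : Multiset α} {a : α} (hs : ∀ x ∈ s, x < a) (m : ℕ)
    (w : StirlingWord s) (k : Fin (s.card + 1)) : StirlingWord (s + Multiset.replicate m a) :=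
  ⟨w.1.take k ++ (List.replicate m a ++ w.1.drop k), by
    rw [← Multiset.coe_add, ← Multiset.coe_add, Multiset.coe_replicate, add_left_comm,
      Multiset.coe_add, List.take_append_drop, w.2.1, add_comm], by
    refine Avoids212.append_replicate_append ?_ ?_ m <;> rw [List.take_append_drop]
    · exact w.2.2
    · exact fun x hx => hs x (w.2.1 ▸ hx)⟩

theorem StirlingWord.insertBlock_injective [Preorder α] {s : Multiset α} {a : α}
    (hs : ∀ x ∈ s, x < a) {m : ℕ} (hm : m ≠ 0) :
    Function.Injective fun wk : StirlingWord s × Fin (s.card + 1) =>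
      wk.1.insertBlock hs m wk.2 := by
  rintro ⟨w, k⟩ ⟨w', k'⟩ h
  have ha (v : StirlingWord s) (i : ℕ) : a ∉ v.1.take i := fun hi =>
    (hs a (v.2.1 ▸ List.mem_of_mem_take hi)).false
  have hlength (v : StirlingWord s) : v.1.length = s.card := congrArg Multiset.card v.2.1
  obtain ⟨htake, hdrop⟩ := append_replicate_append_inj hm (ha w k) (ha w' k')
    (congrArg Subtype.val h)
  have hw : w.1 = w'.1 := by
    rw [← List.take_append_drop k w.1, htake, hdrop, List.take_append_drop]
  have hk : (k : ℕ) = k' := by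
    simpa [hlength, Nat.le_of_lt_succ k.2, Nat.le_of_lt_succ k'.2] using
      congrArg List.length htake
  exact Prod.ext (Subtype.ext hw) (Fin.ext hk)

theorem StirlingWord.insertBlock_surjective [PartialOrder α] {s : Multiset α} {a : α}
    (hs : ∀ x ∈ s, x < a) (m : ℕ) :
    Function.Surjective fun wk : StirlingWord s × Fin (s.card + 1) =>
      wk.1.insertBlock hs m wk.2 := by
  classical
  rintro ⟨l, hl, havoid⟩
  have hle : ∀ x ∈ l, x ≤ a := by
    intro x hx
    rw [← Multiset.mem_coe, hl, Multiset.mem_add] at hx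
    exact hx.elim (fun hx => (hs x hx).le) fun hx => (Multiset.eq_of_mem_replicate hx).le
  have hcount : l.count a = m := by
    have has : a ∉ s := fun ha => (hs a ha).false
    rw [← Multiset.coe_count, hl, Multiset.count_add, Multiset.count_eq_zero_of_notMem has,
      Multiset.count_replicate_self, zero_add]
  obtain ⟨p, q, -, -, heq⟩ := havoid.exists_eq_append_replicate_append hle
  rw [hcount] at heq
  have hpq : ((p ++ q : List α) : Multiset α) = s := by
    refine add_right_cancel (b := Multiset.replicate m a) ?_
    rw [← hl, heq, ← Multiset.coe_add, ← Multiset.coe_add, ← Multiset.coe_add,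
      Multiset.coe_replicate, add_right_comm, add_assoc]
  have hp : p.length < s.card + 1 := by
    rw [← hpq, Multiset.coe_card, List.length_append]
    omega
  have hsub : (p ++ q).Sublist l := by
    rw [heq]
    exact (List.Sublist.refl p).append (List.sublist_append_right _ q)
  refine ⟨(⟨p ++ q, hpq, havoid.sublist hsub⟩, ⟨p.length, hp⟩), Subtype.ext ?_⟩
  simp [insertBlock, heq]

theorem StirlingWord.card_add_replicate [PartialOrder α] {s : Multiset α} {a : α}
    (hs : ∀ x ∈ s, x < a) {m : ℕ} (hm : m ≠ 0) :
    Nat.card (StirlingWord (s + Multiset.replicate m a)) =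
      Nat.card (StirlingWord s) * (s.card + 1) := by
  rw [← Nat.card_eq_of_bijective _ ⟨insertBlock_injective hs hm, insertBlock_surjective hs m⟩,
    Nat.card_prod, Nat.card_fin]

theorem StirlingWord.card_zero [LT α] : Nat.card (StirlingWord (0 : Multiset α)) = 1 := by
  refine Nat.card_eq_one_iff_exists.2 ⟨⟨[], rfl, fun a b _ h => by simp at h⟩, fun w => ?_⟩
  exact Subtype.ext ((Multiset.coe_eq_zero w.1).1 w.2.1)

theorem filter_lt_add_replicate_count [LinearOrder α] {s : Multiset α} {a : α}
    (hle : ∀ x ∈ s, x ≤ a) :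
    s.filter (· < a) + Multiset.replicate (s.count a) a = s := by
  have hnot : s.filter (¬ · < a) = s.filter (· = a) := Multiset.filter_congr fun x hx => by
    rw [not_lt, (hle x hx).ge_iff_eq]
  rw [← Multiset.filter_eq', ← hnot, Multiset.filter_add_not]

theorem StirlingWord.card_eq_prod [LinearOrder α] (s : Multiset α) :
    Nat.card (StirlingWord s) = ∏ a ∈ s.toFinset, (s.countP (· < a) + 1) := by
  induction ht : s.toFinset using Finset.induction_on_max generalizing s with
  | empty =>
    obtain rfl : s = 0 := Multiset.toFinset_eq_empty.1 ht
    rw [card_zero, Finset.prod_empty]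
  | insert a t hlt ih =>
    set u := s.filter (· < a) with hu
    have hmem (x : α) : x ∈ s ↔ x = a ∨ x ∈ t := by
      rw [← Multiset.mem_toFinset, ht, Finset.mem_insert]
    have hs : u + Multiset.replicate (s.count a) a = s :=
      filter_lt_add_replicate_count fun x hx => by
        obtain rfl | hx := (hmem x).1 hx
        exacts [le_rfl, (hlt x hx).le]
    have hcount : s.count a ≠ 0 := Multiset.count_ne_zero.2 ((hmem a).2 (Or.inl rfl))
    have hut : u.toFinset = t := by
      ext x
      rw [Multiset.mem_toFinset, Multiset.mem_filter, hmem]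
      exact ⟨fun h => h.1.resolve_left h.2.ne, fun h => ⟨Or.inr h, hlt x h⟩⟩
    have hcountP : ∀ b ∈ t, u.countP (· < b) = s.countP (· < b) := fun b hb => by
      rw [hu, Multiset.countP_filter]
      exact Multiset.countP_congr rfl fun x _ =>
        propext (and_iff_left_of_imp fun hx => hx.trans (hlt b hb))
    calc Nat.card (StirlingWord s)
        = Nat.card (StirlingWord u) * (u.card + 1) := by
          rw [← card_add_replicate (fun x hx => (Multiset.mem_filter.1 hx).2) hcount, hs]
      _ = (∏ b ∈ t, (s.countP (· < b) + 1)) * (s.countP (· < a) + 1) := by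
          rw [ih u hut, Finset.prod_congr rfl fun b hb => by rw [hcountP b hb],
            Multiset.countP_eq_card_filter]
      _ = ∏ b ∈ insert a t, (s.countP (· < b) + 1) := by
          rw [Finset.prod_insert fun ha => (hlt a ha).false, mul_comm]

end StirlingWord

theorem isRegularWord_iff_map_eq_nsmul {l n m : ℕ} {w : Fin l → Fin n} :
    IsRegularWord m w ↔ Finset.univ.val.map w = m • Finset.univ.val := by
  rw [IsRegularWord, Multiset.ext]
  refine forall_congr' fun j => ?_
  rw [Multiset.count_map, Multiset.count_nsmul, Multiset.count_univ, mul_one]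
  simp only [Finset.card, Finset.filter_val, eq_comm (a := j)]

theorem countP_lt_univ_val {n : ℕ} (a : Fin n) :
    (Finset.univ : Finset (Fin n)).val.countP (· < a) = a := by
  rw [Multiset.countP_eq_card_filter, ← Finset.filter_val, Finset.card_val, Finset.filter_gt_eq_Iio,
    Fin.card_Iio]

theorem stirling_count_general {l n : ℕ} (s : Multiset (Fin n)) (hs : s.card = l) :
    Nat.card {w : Fin l → Fin n // Finset.univ.val.map w = s ∧ ¬ Contains212 w} =
      ∏ a ∈ s.toFinset, (s.countP (· < a) + 1) := by
  rw [card_subtype_map_eq_and_not_contains212 hs, StirlingWord.card_eq_prod]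

/-- The number of `m`-Stirling permutations with `n` distinct elements. -/
theorem stirling_count (n m : ℕ) (hn : 0 < n) (hm : 0 < m) :
    Nat.card {w : Fin (n * m) → Fin n // IsRegularWord m w ∧ ¬ Contains212 w} =
      ∏ j ∈ Finset.range n, (j * m + 1) := by
  simp only [isRegularWord_iff_map_eq_nsmul]
  rw [stirling_count_general _ (by simp [mul_comm])]
  simp [Multiset.toFinset_nsmul, hm.ne', Finset.prod_range, countP_lt_univ_val, mul_comm]
end

section
/- The number of permutations of the regular multiset [n]_m avoiding the multiset pattern 212 grows super-exponentially: for every fixed positive integer m and every real constant c ≥ 1, there exists a positive integer n such that the number of 212-avoiding permutations of [n]_m is strictly greater than c^(n·m). Hence the Stanley–Wilf bound fails for forbidden patterns that are themselves multiset permutations. -/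
/-! Writing out a permutation of `[n]` with every letter repeated `m` times in a row gives a regular
word in which equal letters are never separated, hence a 212-avoiding one. There are `n!` of these
words, and `n!` outgrows `(c ^ m) ^ n`. -/

open Filter

theorem monotone_finDivNat {n m : ℕ} : Monotone (Fin.divNat : Fin (n * m) → Fin n) :=
  fun _ _ hab => Nat.div_le_div_right hab

theorem surjective_finDivNat {n m : ℕ} (hm : 0 < m) :
    Function.Surjective (Fin.divNat : Fin (n * m) → Fin n) :=
  fun j => ⟨finProdFinEquiv (j, ⟨0, hm⟩),
    congrArg Prod.fst (finProdFinEquiv.symm_apply_apply (j, ⟨0, hm⟩))⟩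

theorem isRegularWord_finDivNat (n m : ℕ) :
    IsRegularWord m (Fin.divNat : Fin (n * m) → Fin n) := by
  intro j
  have fiber_card : (Finset.univ.filter fun i : Fin (n * m) => i.divNat = j).card =
      (({j} : Finset (Fin n)) ×ˢ (Finset.univ : Finset (Fin m))).card :=
    Finset.card_equiv finProdFinEquiv.symm (by simp [eq_comm])
  rw [fiber_card, Finset.card_product, Finset.card_singleton, one_mul, Finset.card_fin]

theorem IsRegularWord.perm_comp {l n m : ℕ} {w : Fin l → Fin n} (hw : IsRegularWord m w)
    (σ : Equiv.Perm (Fin n)) : IsRegularWord m (σ ∘ w) := by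
  intro j
  simpa only [Function.comp_apply, ← Equiv.eq_symm_apply] using hw (σ.symm j)

theorem not_contains212_comp_of_injective_of_monotone {l k n : ℕ} {σ : Fin k → Fin n}
    {g : Fin l → Fin k} (hσ : Function.Injective σ) (hg : Monotone g) : ¬ Contains212 (σ ∘ g) := by
  rintro ⟨i₁, i₂, i₃, h₁₂, h₂₃, heq, hlt⟩
  have g_eq : g i₂ = g i₁ :=
    le_antisymm ((hg h₂₃.le).trans_eq (hσ heq).symm) (hg h₁₂.le)
  exact hlt.ne (congrArg σ g_eq)

theorem factorial_le_card_regular_avoiding_212 (n : ℕ) {m : ℕ} (hm : 0 < m) :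
    n.factorial ≤
      Nat.card {w : Fin (n * m) → Fin n // IsRegularWord m w ∧ ¬ Contains212 w} := by
  let blockWord (σ : Equiv.Perm (Fin n)) :
      {w : Fin (n * m) → Fin n // IsRegularWord m w ∧ ¬ Contains212 w} :=
    ⟨σ ∘ Fin.divNat, (isRegularWord_finDivNat n m).perm_comp σ,
      not_contains212_comp_of_injective_of_monotone σ.injective monotone_finDivNat⟩
  have blockWord_injective : Function.Injective blockWord := fun _ _ h =>
    DFunLike.coe_injective ((surjective_finDivNat hm).injective_comp_right (congrArg Subtype.val h))
  calc n.factorial = Nat.card (Equiv.Perm (Fin n)) := by rw [Nat.card_perm, Nat.card_fin]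
    _ ≤ _ := Nat.card_le_card_of_injective blockWord blockWord_injective

theorem stirling_superexponential_general {m : ℕ} (hm : 0 < m) (c : ℝ) :
    ∀ᶠ n : ℕ in atTop, c ^ (n * m) <
      (Nat.card {w : Fin (n * m) → Fin n // IsRegularWord m w ∧ ¬ Contains212 w} : ℝ) := by
  filter_upwards [FloorSemiring.eventually_mul_pow_lt_factorial_sub 1 (c ^ m) 0] with n hn
  calc c ^ (n * m) = (c ^ m) ^ n := pow_mul' c n m
    _ < n.factorial := by rwa [one_mul, Nat.sub_zero] at hn
    _ ≤ _ := mod_cast factorial_le_card_regular_avoiding_212 n hm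

/-- The number of `212`-avoiding multiset permutations grows super-exponentially. -/
theorem stirling_superexponential (m : ℕ) (hm : 0 < m) (c : ℝ) (hc : 1 ≤ c) :
    ∃ n : ℕ, 0 < n ∧
      c ^ (n * m) <
        (Nat.card {w : Fin (n * m) → Fin n // IsRegularWord m w ∧ ¬ Contains212 w} : ℝ) :=
  ((eventually_gt_atTop 0).and (stirling_superexponential_general hm c)).exists
end
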